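/- arXiv:2408.13737 — 3 statements merged into one kernel-verified Lean document; each statement's English description precedes it below -/
import Mathlib

section
/- Let q ≥ 2 be an integer that is not a prime power (i.e., q has at least two distinct prime factors). Then 2^{φ(q)} · ∏_{1 ≤ k ≤ q-1, gcd(k,q)=1} sin(kπ/q) = 1, where φ is Euler's totient function. -/
open scoped Real

/-!
Each factor `2 sin (kπ/q)` is the length `|1 - ζ ^ k|` of a chord of the unit circle, where
`ζ = exp (2πi/q)`. As `k` runs over the residues coprime to `q`, the powers `ζ ^ k` run over the
roots of the cyclotomic polynomial `Φ_q`, so the product of these lengths is `Φ_q(1)`, which is `1`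
unless `q` is `1` or a prime power.
-/

open Finset Polynomial

section PrimitiveRoots

variable {R : Type*} [CommRing R] [IsDomain R] {ζ : R} {n : ℕ}

theorem prod_primitiveRoots_eq_prod_coprime {M : Type*} [CommMonoid M]
    (hζ : IsPrimitiveRoot ζ n) (f : R → M) :
    ∏ μ ∈ primitiveRoots n R, f μ = ∏ k ∈ range n with n.Coprime k, f (ζ ^ k) := by
  rcases n.eq_zero_or_pos with rfl | hn
  · simp
  have : NeZero n := ⟨hn.ne'⟩
  symm
  refine prod_bij (fun k _ ↦ ζ ^ k) ?mapsTo ?injective ?surjective fun _ _ ↦ rfl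
  case mapsTo =>
    intro k hk
    exact (mem_primitiveRoots hn).2 (hζ.pow_of_coprime k (mem_filter.1 hk).2.symm)
  case injective =>
    intro i hi j hj hij
    exact hζ.pow_inj (mem_range.1 (mem_filter.1 hi).1) (mem_range.1 (mem_filter.1 hj).1) hij
  case surjective =>
    intro μ hμ
    obtain ⟨k, hkn, hk, rfl⟩ := hζ.isPrimitiveRoot_iff.1 (isPrimitiveRoot_of_mem_primitiveRoots hμ)
    exact ⟨k, mem_filter.2 ⟨mem_range.2 hkn, hk.symm⟩, rfl⟩

theorem eval_cyclotomic_eq_prod_coprime (hζ : IsPrimitiveRoot ζ n) (x : R) :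
    (cyclotomic n R).eval x = ∏ k ∈ range n with n.Coprime k, (x - ζ ^ k) := by
  rw [cyclotomic_eq_prod_X_sub_primitiveRoots hζ, eval_prod,
    prod_primitiveRoots_eq_prod_coprime hζ]
  simp only [eval_sub, eval_X, eval_C]

end PrimitiveRoots

theorem eval_one_cyclotomic_of_not_isPrimePow {R : Type*} [Ring R] {n : ℕ} (hn : n ≠ 1)
    (h : ¬IsPrimePow n) : (cyclotomic n R).eval 1 = 1 := by
  refine eval_one_cyclotomic_not_prime_pow fun {p} hp k hk ↦ ?_
  have hk0 : k ≠ 0 := by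
    rintro rfl
    exact hn (hk.symm.trans (pow_zero p))
  exact h (hk ▸ hp.isPrimePow.pow hk0)

theorem norm_one_sub_exp_two_mul_I {θ : ℝ} (h₀ : 0 ≤ θ) (hπ : θ ≤ π) :
    ‖1 - Complex.exp (2 * θ * Complex.I)‖ = 2 * Real.sin θ := by
  have hsin : 0 ≤ 2 * Real.sin θ :=
    mul_nonneg zero_le_two (Real.sin_nonneg_of_nonneg_of_le_pi h₀ hπ)
  have hchord := Complex.norm_exp_I_mul_ofReal_sub_one (2 * θ)
  rw [mul_div_cancel_left₀ θ two_ne_zero, Real.norm_of_nonneg hsin] at hchord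
  rw [norm_sub_rev, ← hchord, Complex.ofReal_mul, Complex.ofReal_ofNat, mul_comm Complex.I]

theorem norm_one_sub_exp_two_pi_mul_I_div_pow {n k : ℕ} (hk : k ≤ n) :
    ‖1 - Complex.exp (2 * π * Complex.I / n) ^ k‖ = 2 * Real.sin (k * π / n) := by
  have hπ : k * π / n ≤ π := by
    rw [mul_div_right_comm]
    exact mul_le_of_le_one_left Real.pi_nonneg
      (div_le_one_of_le₀ (Nat.cast_le.2 hk) n.cast_nonneg)
  rw [← norm_one_sub_exp_two_mul_I (by positivity) hπ, ← Complex.exp_nat_mul]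
  congr 3
  push_cast
  ring

theorem two_pow_totient_mul_prod_sin_eq_eval_one_cyclotomic (n : ℕ) :
    2 ^ n.totient * ∏ k ∈ range n with n.Coprime k, Real.sin (k * π / n) =
      (cyclotomic n ℝ).eval 1 := by
  rcases eq_or_ne n 0 with rfl | hn
  · simp
  calc 2 ^ n.totient * ∏ k ∈ range n with n.Coprime k, Real.sin (k * π / n)
    _ = ∏ k ∈ range n with n.Coprime k, 2 * Real.sin (k * π / n) := by
      rw [prod_mul_distrib, prod_const, Nat.totient_eq_card_coprime]
    _ = ∏ k ∈ range n with n.Coprime k, ‖1 - Complex.exp (2 * π * Complex.I / n) ^ k‖ :=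
      prod_congr rfl fun k hk ↦
        (norm_one_sub_exp_two_pi_mul_I_div_pow (mem_range.1 (mem_filter.1 hk).1).le).symm
    _ = ‖(cyclotomic n ℂ).eval 1‖ := by
      rw [eval_cyclotomic_eq_prod_coprime (Complex.isPrimitiveRoot_exp n hn), norm_prod]
    _ = ‖(cyclotomic n ℝ).eval 1‖ := by
      rw [← Complex.ofReal_one, cyclotomic.eval_apply_ofReal, Complex.norm_real]
    _ = (cyclotomic n ℝ).eval 1 := Real.norm_of_nonneg (cyclotomic_nonneg n le_rfl)

theorem filter_gcd_Icc_eq_filter_coprime_range {n : ℕ} (hn : n ≠ 1) :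
    {k ∈ Icc 1 (n - 1) | Nat.gcd k n = 1} = {k ∈ range n | n.Coprime k} := by
  ext k
  have hk0 : n.Coprime k → k ≠ 0 := by
    rintro hk rfl
    exact hn (n.coprime_zero_right.1 hk)
  simp only [mem_filter, mem_Icc, mem_range, ← Nat.coprime_iff_gcd_eq_one,
    Nat.coprime_comm (n := k)]
  grind

/-- If `q ≥ 2` is not a prime power, then `2^{φ(q)} ∏_{1 ≤ k ≤ q-1, (k,q)=1} sin(kπ/q) = 1`. -/
theorem stmt14 (q : ℕ) (hq : 2 ≤ q) (h : ¬ IsPrimePow q) :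
    (2 : ℝ) ^ q.totient *
      ∏ k ∈ Finset.filter (fun k => Nat.gcd k q = 1) (Finset.Icc 1 (q - 1)),
        Real.sin ((k : ℝ) * π / q) = 1 := by
  have hq1 : q ≠ 1 := by lia
  rw [filter_gcd_Icc_eq_filter_coprime_range hq1,
    two_pow_totient_mul_prod_sin_eq_eval_one_cyclotomic,
    eval_one_cyclotomic_of_not_isPrimePow hq1 h]
end

section
/- Let q ≥ 2 and let f : ℤ → ℂ be a periodic function with period q. Then L'(0,f) = -log q · ∑_{a=1}^{q} f(a)(1/2 - a/q) + ∑_{a=1}^{q} f(a) · log Γ(a/q) - (1/2) log(2π) · ∑_{a=1}^{q} f(a), where Γ is the Gamma function. -/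
open scoped Real

/-- The value at `s = 0` of the derivative of the analytic continuation of
`L(s,f) = ∑_{n ≥ 1} f(n)/n^s`, given via `L(s,f) = q^{-s} ∑_{a=1}^q f(a) ζ(s, a/q)`
with `ζ` the Hurwitz zeta function. -/
noncomputable def Lderiv0 (q : ℕ) (f : ℤ → ℂ) : ℂ :=
  deriv (fun s : ℂ =>
    (q : ℂ) ^ (-s) *
      ∑ a ∈ Finset.Icc 1 q, f a * HurwitzZeta.hurwitzZeta (((a : ℝ) / q : ℝ) : UnitAddCircle) s) 0

/-! For `0 < x ≤ 1`, the series `∑ ((n + x)^(-s) - (n + 1)^(-s))` for `ζ(s, x) - ζ(s)` is only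
available for `0 < re s`. Replacing each term by the error made when `t ↦ t^(-s)` is extrapolated
linearly from `n + 1` and `n + 2` to `n + x` changes the sum by a telescoping series with sum
`1 - x`, and makes the terms `O(n^(-re s - 2))`, so that the new series is holomorphic on
`-1 < re s`. At `s = 0` all its terms vanish, while its derivative is the series of extrapolation
errors of `-log`, whose partial sums are, up to `o(1)`, the Gauss approximations to `log Γ(x)`. With
`ζ(0) = -1/2` and `ζ'(0) = -log(2π)/2` this gives `ζ(0, x)` and `ζ'(0, x)`, and the product rule
does the rest. -/

open Filter Topology HurwitzZeta

theorem rpow_le_rpow_add_rpow {b p q r : ℝ} (hb : 0 < b) (hpr : p ≤ r) (hrq : r ≤ q) :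
    b ^ r ≤ b ^ p + b ^ q := by
  rcases le_total b 1 with h | h
  · exact (Real.rpow_le_rpow_of_exponent_ge hb h hpr).trans
      (le_add_of_nonneg_right (Real.rpow_nonneg hb.le q))
  · exact (Real.rpow_le_rpow_of_exponent_le h hrq).trans
      (le_add_of_nonneg_left (Real.rpow_nonneg hb.le p))

theorem norm_sub_sub_smul_deriv_le {𝕜 E : Type*} [RCLike 𝕜] [NormedAddCommGroup E]
    [NormedSpace 𝕜 E] {f f' f'' : 𝕜 → E} {s : Set 𝕜} {B : ℝ} (hs : Convex ℝ s)
    (hf : ∀ t ∈ s, HasDerivWithinAt f (f' t) s t) (hf' : ∀ t ∈ s, HasDerivWithinAt f' (f'' t) s t)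
    (hB : ∀ t ∈ s, ‖f'' t‖ ≤ B) {x y : 𝕜} (hx : x ∈ s) (hy : y ∈ s) :
    ‖f y - f x - (y - x) • f' x‖ ≤ B * ‖y - x‖ ^ 2 := by
  have hB₀ : 0 ≤ B := (norm_nonneg _).trans (hB x hx)
  let u : Set 𝕜 := s ∩ Metric.closedBall x ‖y - x‖
  have hu : Convex ℝ u := hs.inter (convex_closedBall _ _)
  have hf'_sub : ∀ t ∈ u, ‖f' t - f' x‖ ≤ B * ‖y - x‖ := fun t ht ↦
    (hs.norm_image_sub_le_of_norm_hasDerivWithin_le hf' hB hx ht.1).trans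
      (mul_le_mul_of_nonneg_left (mem_closedBall_iff_norm.1 ht.2) hB₀)
  have hg : ∀ t ∈ u, HasDerivWithinAt (fun t ↦ f t - (t - x) • f' x) (f' t - f' x) u t := by
    intro t ht
    have hlinear : HasDerivWithinAt (fun t ↦ (t - x) • f' x) (f' x) u t := by
      simpa only [id, one_smul] using ((hasDerivWithinAt_id t u).sub_const x).smul_const (f' x)
    exact ((hf t ht.1).mono Set.inter_subset_left).fun_sub hlinear
  have hxu : x ∈ u := ⟨hx, Metric.mem_closedBall_self (norm_nonneg _)⟩
  have hyu : y ∈ u := ⟨hy, mem_closedBall_iff_norm.2 le_rfl⟩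
  calc ‖f y - f x - (y - x) • f' x‖
      = ‖(f y - (y - x) • f' x) - (f x - (x - x) • f' x)‖ := by
        rw [sub_self, zero_smul, sub_zero, sub_right_comm]
    _ ≤ B * ‖y - x‖ * ‖y - x‖ :=
        hu.norm_image_sub_le_of_norm_hasDerivWithin_le hg hf'_sub hxu hyu
    _ = B * ‖y - x‖ ^ 2 := by ring

/-- The error made when the value `φ (n + x)` is predicted by extrapolating `φ` linearly from
`n + 1` and `n + 2`. It regularises the difference `φ (n + x) - φ (n + 1)`. -/
def extrapolationError {E : Type*} [AddCommGroup E] [Module ℝ E] (φ : ℝ → E) (x : ℝ) (n : ℕ) : E :=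
  φ (n + x) - φ (n + 1) - (1 - x) • (φ (n + 1) - φ (n + 2))

namespace extrapolationError

section Algebra

variable {E : Type*} [AddCommGroup E] [Module ℝ E]

theorem const (c : E) (x : ℝ) (n : ℕ) : extrapolationError (fun _ ↦ c) x n = 0 := by
  simp [extrapolationError]

theorem sum_range (φ : ℝ → E) (x : ℝ) (N : ℕ) :
    ∑ n ∈ Finset.range N, extrapolationError φ x n =
      ∑ n ∈ Finset.range N, (φ (n + x) - φ (n + 1)) - (1 - x) • (φ 1 - φ (N + 1)) := by
  have telescope : ∑ n ∈ Finset.range N, (φ (n + 1) - φ (n + 2)) = φ 1 - φ (N + 1) := by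
    simpa [add_assoc, one_add_one_eq_two] using Finset.sum_range_sub' (fun n : ℕ ↦ φ (n + 1)) N
  simp only [extrapolationError, Finset.sum_sub_distrib, ← Finset.smul_sum, ← telescope]

theorem hasSum [TopologicalSpace E] [IsTopologicalAddGroup E] [ContinuousConstSMul ℝ E]
    {φ : ℝ → E} {x : ℝ} {a b : E} (ha : HasSum (fun n : ℕ ↦ φ (n + x)) a)
    (hb : HasSum (fun n : ℕ ↦ φ (n + 1)) b) :
    HasSum (extrapolationError φ x) (a - b - (1 - x) • φ 1) := by
  have hb' : HasSum (fun n : ℕ ↦ φ (n + 2)) (b - φ 1) := by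
    simpa [add_assoc, one_add_one_eq_two] using (hasSum_nat_add_iff' 1).2 hb
  have h := (ha.sub hb).sub ((hb.sub hb').const_smul (1 - x))
  rwa [sub_sub_cancel] at h

end Algebra

theorem ofReal (φ : ℝ → ℝ) (x : ℝ) (n : ℕ) :
    ((extrapolationError φ x n : ℝ) : ℂ) = extrapolationError (fun t ↦ (φ t : ℂ)) x n := by
  simp only [extrapolationError, smul_eq_mul, Complex.ofReal_sub, Complex.ofReal_mul,
    Complex.real_smul]

theorem norm_le {E : Type*} [NormedAddCommGroup E] [NormedSpace ℝ E] {φ φ' φ'' : ℝ → E} {x B : ℝ}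
    (hx : x ∈ Set.Icc 0 1) (n : ℕ)
    (hφ : ∀ t ∈ Set.Ici (n + x), HasDerivWithinAt φ (φ' t) (Set.Ici (n + x)) t)
    (hφ' : ∀ t ∈ Set.Ici (n + x), HasDerivWithinAt φ' (φ'' t) (Set.Ici (n + x)) t)
    (hB : ∀ t ∈ Set.Ici (n + x), ‖φ'' t‖ ≤ B) :
    ‖extrapolationError φ x n‖ ≤ 2 * B := by
  obtain ⟨hx₀, hx₁⟩ := hx
  have hB₀ : 0 ≤ B := (norm_nonneg _).trans (hB _ Set.self_mem_Ici)
  have taylor {y : ℝ} (hy : y ∈ Set.Ici (n + x)) :=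
    norm_sub_sub_smul_deriv_le (convex_Ici _) hφ hφ' hB
      (x := n + 1) (by simpa using hx₁) hy
  have left := taylor (y := n + x) Set.self_mem_Ici
  have right := taylor (y := n + 2) (by simpa using hx₁.trans one_le_two)
  rw [show (n + x - (n + 1) : ℝ) = -(1 - x) by ring, norm_neg,
    Real.norm_of_nonneg (sub_nonneg.2 hx₁)] at left
  rw [show (n + 2 - (n + 1) : ℝ) = 1 by ring, norm_one, one_pow, mul_one, one_smul] at right
  calc ‖extrapolationError φ x n‖
      = ‖(φ (n + x) - φ (n + 1) - (-(1 - x)) • φ' (n + 1)) +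
          (1 - x) • (φ (n + 2) - φ (n + 1) - φ' (n + 1))‖ := by
        congr 1; unfold extrapolationError; module
    _ ≤ B * (1 - x) ^ 2 + (1 - x) * B := by
        refine (norm_add_le _ _).trans (add_le_add left ?_)
        rw [norm_smul, Real.norm_of_nonneg (sub_nonneg.2 hx₁)]
        exact mul_le_mul_of_nonneg_left right (sub_nonneg.2 hx₁)
    _ ≤ 2 * B := by nlinarith [mul_nonneg hB₀ hx₀]

theorem hasDerivAt {𝕜 E : Type*} [NontriviallyNormedField 𝕜] [NormedAddCommGroup E]
    [NormedSpace 𝕜 E] [NormedSpace ℝ E] [SMulCommClass 𝕜 ℝ E] {φ : 𝕜 → ℝ → E} {φ' : ℝ → E}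
    {s : 𝕜} {x : ℝ} (hx : 0 < x) (hφ : ∀ t > 0, HasDerivAt (φ · t) (φ' t) s) (n : ℕ) :
    HasDerivAt (fun w ↦ extrapolationError (φ w) x n) (extrapolationError φ' x n) s :=
  ((hφ _ (by positivity)).sub (hφ _ (by positivity))).sub
    (((hφ _ (by positivity)).sub (hφ _ (by positivity))).fun_const_smul (1 - x))

end extrapolationError

theorem sum_range_extrapolationError_neg_log (x : ℝ) (N : ℕ) :
    ∑ n ∈ Finset.range (N + 1), extrapolationError (fun t ↦ -Real.log t) x n =
      Real.BohrMollerup.logGammaSeq x N + x * (Real.log (N + 1) - Real.log N) -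
        (1 - x) * (Real.log ((N + 1 : ℕ) + 1) - Real.log (N + 1 : ℕ)) := by
  have hfactorial : ∑ n ∈ Finset.range (N + 1), Real.log (n + 1) =
      Real.log N.factorial + Real.log (N + 1) := by
    rw [Finset.sum_range_succ, ← Finset.prod_range_add_one_eq_factorial, Nat.cast_prod,
      Real.log_prod fun n _ ↦ by positivity]
    simp only [Nat.cast_add, Nat.cast_one]
  rw [extrapolationError.sum_range, Real.BohrMollerup.logGammaSeq]
  simp only [neg_sub_neg, Finset.sum_sub_distrib, hfactorial, Real.log_one, smul_eq_mul,
    add_comm x, Nat.cast_add, Nat.cast_one]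
  ring

theorem tendsto_sum_range_extrapolationError_neg_log {x : ℝ} (hx : 0 < x) :
    Tendsto (fun N ↦ ∑ n ∈ Finset.range N, extrapolationError (fun t ↦ -Real.log t) x n) atTop
      (𝓝 (Real.log (Real.Gamma x))) := by
  rw [← tendsto_add_atTop_iff_nat 1]
  simp only [sum_range_extrapolationError_neg_log]
  have hlog := Real.tendsto_log_nat_add_one_sub_log
  simpa using ((Real.BohrMollerup.tendsto_log_gamma hx).add (hlog.const_mul x)).sub
    (((tendsto_add_atTop_iff_nat 1).2 hlog).const_mul (1 - x))

section ExtrapolationSeries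

variable {x : ℝ} {s : ℂ}

theorem norm_extrapolationError_cpow_neg_le (hx : x ∈ Set.Ioc 0 1) (hs : -2 ≤ s.re) (n : ℕ) :
    ‖extrapolationError (fun t ↦ (t : ℂ) ^ (-s)) x n‖ ≤
      2 * (‖s‖ * ‖s + 1‖ * (n + x) ^ (-s.re - 2)) := by
  have hnx : 0 < n + x := add_pos_of_nonneg_of_pos n.cast_nonneg hx.1
  have hderiv (r : ℂ) : ∀ t ∈ Set.Ici (n + x),
      HasDerivWithinAt (fun y : ℝ ↦ (y : ℂ) ^ r) (r * (t : ℂ) ^ (r - 1)) (Set.Ici (n + x)) t := by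
    intro t ht
    have ht₀ : (t : ℂ) ∈ Complex.slitPlane := Complex.ofReal_mem_slitPlane.2 (hnx.trans_le ht)
    simpa using ((hasDerivAt_id (t : ℂ)).cpow_const ht₀).comp_ofReal.hasDerivWithinAt
  refine extrapolationError.norm_le (Set.Ioc_subset_Icc_self hx) n (hderiv (-s))
    (fun t ht ↦ (hderiv (-s - 1) t ht).const_mul (-s)) fun t ht ↦ ?_
  have hexp : (-s - 1 - 1).re = -s.re - 2 := by
    simp only [Complex.sub_re, Complex.neg_re, Complex.one_re]; ring
  rw [norm_mul, norm_mul, norm_neg, ← neg_add', norm_neg, neg_add', ← mul_assoc,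
    Complex.norm_cpow_eq_rpow_re_of_pos (hnx.trans_le ht), hexp]
  exact mul_le_mul_of_nonneg_left (Real.rpow_le_rpow_of_nonpos hnx ht (by linarith)) (by positivity)

theorem exists_isOpen_summable_norm_extrapolationError_le (hx : x ∈ Set.Ioc 0 1)
    (hs : -1 < s.re) :
    ∃ U : Set ℂ, IsOpen U ∧ s ∈ U ∧ ∃ u : ℕ → ℝ, Summable u ∧
      ∀ n, ∀ w ∈ U, ‖extrapolationError (fun t ↦ (t : ℂ) ^ (-w)) x n‖ ≤ u n := by
  obtain ⟨σ, hσ, hσs⟩ := exists_between hs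
  obtain ⟨R, hsR⟩ := exists_gt ‖s‖
  have hsummable {p : ℝ} (hp : p < -1) : Summable fun n : ℕ ↦ (n + x) ^ p := by
    refine ((Real.summable_one_div_nat_add_rpow x (-p)).2 (by linarith)).congr fun n ↦ ?_
    have hnx : 0 < n + x := add_pos_of_nonneg_of_pos n.cast_nonneg hx.1
    rw [abs_of_pos hnx, Real.rpow_neg hnx.le, one_div, inv_inv]
  have hR : 0 < R := (norm_nonneg s).trans_lt hsR
  refine ⟨{w | σ < w.re} ∩ Metric.ball 0 R,
    (isOpen_lt continuous_const Complex.continuous_re).inter Metric.isOpen_ball,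
    ⟨hσs, mem_ball_zero_iff.2 hsR⟩,
    fun n ↦ 2 * (R * (R + 1) * ((n + x) ^ (-R - 2) + (n + x) ^ (-σ - 2))),
    (((hsummable (by linarith)).add (hsummable (by linarith))).mul_left _).mul_left _, ?_⟩
  rintro n w ⟨hσw : σ < w.re, hw⟩
  have hwR : ‖w‖ < R := mem_ball_zero_iff.1 hw
  have hnx : 0 < n + x := add_pos_of_nonneg_of_pos n.cast_nonneg hx.1
  have hw₁ : ‖w + 1‖ ≤ R + 1 := (norm_add_le w 1).trans (by rw [norm_one]; linarith)
  have hpow : (n + x) ^ (-w.re - 2) ≤ (n + x) ^ (-R - 2) + (n + x) ^ (-σ - 2) :=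
    rpow_le_rpow_add_rpow hnx (by linarith [Complex.re_le_norm w]) (by linarith)
  refine (norm_extrapolationError_cpow_neg_le hx (by linarith) n).trans ?_
  beta_reduce
  gcongr

theorem hasDerivAt_extrapolationError_cpow_neg (hx : 0 < x) (n : ℕ) (s : ℂ) :
    HasDerivAt (fun w : ℂ ↦ extrapolationError (fun t ↦ (t : ℂ) ^ (-w)) x n)
      (extrapolationError (fun t ↦ -((t : ℂ) ^ (-s) * Real.log t)) x n) s := by
  refine extrapolationError.hasDerivAt hx (fun t ht ↦ ?_) n
  rw [Complex.ofReal_log ht.le, ← mul_neg_one]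
  exact (hasDerivAt_neg s).const_cpow (Or.inl (Complex.ofReal_ne_zero.2 ht.ne'))

/-- The sum of the extrapolation errors of `t ↦ t^(-s)`. For `0 < x ≤ 1` and `-1 < re s` it
equals `ζ(s, x) - ζ(s) - (1 - x)`. -/
noncomputable def extrapolationSeries (x : ℝ) (s : ℂ) : ℂ :=
  ∑' n, extrapolationError (fun t ↦ (t : ℂ) ^ (-s)) x n

theorem differentiableAt_extrapolationSeries (hx : x ∈ Set.Ioc 0 1) (hs : -1 < s.re) :
    DifferentiableAt ℂ (extrapolationSeries x) s := by
  obtain ⟨U, hU, hsU, u, hu, hle⟩ := exists_isOpen_summable_norm_extrapolationError_le hx hs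
  exact (Complex.differentiableOn_tsum_of_summable_norm hu (fun n w _ ↦
    (hasDerivAt_extrapolationError_cpow_neg hx.1 n w).differentiableAt.differentiableWithinAt)
    hU hle).differentiableAt (hU.mem_nhds hsU)

theorem hasSum_deriv_extrapolationSeries (hx : x ∈ Set.Ioc 0 1) (hs : -1 < s.re) :
    HasSum (extrapolationError (fun t ↦ -((t : ℂ) ^ (-s) * Real.log t)) x)
      (deriv (extrapolationSeries x) s) := by
  obtain ⟨U, hU, hsU, u, hu, hle⟩ := exists_isOpen_summable_norm_extrapolationError_le hx hs
  refine (Complex.hasSum_deriv_of_summable_norm hu (fun n w _ ↦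
    (hasDerivAt_extrapolationError_cpow_neg hx.1 n w).differentiableAt.differentiableWithinAt)
    hU hle hsU).congr_fun fun n ↦ ?_
  exact (hasDerivAt_extrapolationError_cpow_neg hx.1 n s).deriv.symm

theorem extrapolationSeries_zero (x : ℝ) : extrapolationSeries x 0 = 0 := by
  simp only [extrapolationSeries, neg_zero, Complex.cpow_zero, extrapolationError.const, tsum_zero]

theorem deriv_extrapolationSeries_zero (hx : x ∈ Set.Ioc 0 1) :
    deriv (extrapolationSeries x) 0 = Real.log (Real.Gamma x) := by
  have hsum := hasSum_deriv_extrapolationSeries hx (s := 0) (by norm_num)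
  simp only [neg_zero, Complex.cpow_zero, one_mul, ← Complex.ofReal_neg] at hsum
  refine tendsto_nhds_unique hsum.tendsto_sum_nat ?_
  simpa only [Complex.ofReal_sum, extrapolationError.ofReal] using
    (tendsto_sum_range_extrapolationError_neg_log hx.1).ofReal

end ExtrapolationSeries

section Hurwitz

variable {x : ℝ}

theorem hurwitzZeta_sub_riemannZeta_of_one_lt_re (hx : x ∈ Set.Icc 0 1) {s : ℂ} (hs : 1 < s.re) :
    hurwitzZeta (x : UnitAddCircle) s - riemannZeta s = (1 - x) + extrapolationSeries x s := by
  have hzeta {y : ℝ} (hy : y ∈ Set.Icc 0 1) :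
      HasSum (fun n : ℕ ↦ ((n + y : ℝ) : ℂ) ^ (-s)) (hurwitzZeta (y : UnitAddCircle) s) := by
    simpa [Complex.cpow_neg] using hasSum_hurwitzZeta_of_one_lt_re hy hs
  have hzeta_one := hzeta (Set.right_mem_Icc.2 zero_le_one)
  rw [AddCircle.coe_period, hurwitzZeta_zero] at hzeta_one
  have hseries := extrapolationError.hasSum (φ := fun t ↦ (t : ℂ) ^ (-s)) (hzeta hx) hzeta_one
  rw [extrapolationSeries, hseries.tsum_eq]
  simp

theorem hurwitzZeta_sub_riemannZeta_of_neg_one_lt_re (hx : x ∈ Set.Ioc 0 1) {s : ℂ}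
    (hs : -1 < s.re) :
    hurwitzZeta (x : UnitAddCircle) s - riemannZeta s = (1 - x) + extrapolationSeries x s := by
  have hopen (a : ℝ) : IsOpen {w : ℂ | a < w.re} :=
    isOpen_lt continuous_const Complex.continuous_re
  have hdiff : Differentiable ℂ fun w ↦ hurwitzZeta (x : UnitAddCircle) w - riemannZeta w := by
    simpa only [hurwitzZeta_zero] using differentiable_hurwitzZeta_sub_hurwitzZeta x 0
  have hdiff_series : DifferentiableOn ℂ (fun w ↦ (1 - x) + extrapolationSeries x w)
      {w | -1 < w.re} := fun w hw ↦
    ((differentiableAt_extrapolationSeries hx hw).const_add _).differentiableWithinAt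
  refine (hdiff.differentiableOn.analyticOnNhd (hopen (-1))).eqOn_of_preconnected_of_eventuallyEq
    (hdiff_series.analyticOnNhd (hopen (-1))) (convex_halfSpace_re_gt (-1)).isPreconnected
    (z₀ := 2) (by norm_num) ?_ hs
  filter_upwards [(hopen 1).mem_nhds (by norm_num : (2 : ℂ) ∈ {w : ℂ | 1 < w.re})] with w hw
  exact hurwitzZeta_sub_riemannZeta_of_one_lt_re (Set.Ioc_subset_Icc_self hx) hw

theorem hurwitzZeta_apply_zero (hx : x ∈ Set.Ioc 0 1) :
    hurwitzZeta (x : UnitAddCircle) 0 = 1 / 2 - x := by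
  have h := hurwitzZeta_sub_riemannZeta_of_neg_one_lt_re hx (s := 0) (by norm_num)
  rw [extrapolationSeries_zero, riemannZeta_zero] at h
  linear_combination h

theorem hasDerivAt_hurwitzZeta_zero (hx : x ∈ Set.Ioc 0 1) :
    HasDerivAt (hurwitzZeta (x : UnitAddCircle))
      (Real.log (Real.Gamma x) - 1 / 2 * Real.log (2 * π) : ℂ) 0 := by
  have hseries := (differentiableAt_extrapolationSeries hx (s := 0) (by norm_num)).hasDerivAt
  rw [deriv_extrapolationSeries_zero hx] at hseries
  have hriemann := (differentiableAt_riemannZeta zero_ne_one).hasDerivAt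
  rw [deriv_riemannZeta_zero] at hriemann
  have hnhds : {w : ℂ | -1 < w.re} ∈ 𝓝 0 :=
    (isOpen_lt continuous_const Complex.continuous_re).mem_nhds (by norm_num)
  refine ((hriemann.fun_add (hseries.const_add (1 - x : ℂ))).congr_of_eventuallyEq
    (Filter.eventuallyEq_of_mem hnhds fun w hw ↦ ?_)).congr_deriv ?_
  · rw [← hurwitzZeta_sub_riemannZeta_of_neg_one_lt_re hx hw, add_sub_cancel]
  · rw [Complex.ofReal_log Real.two_pi_pos.le]
    push_cast
    ring

end Hurwitz

theorem natCast_div_mem_Ioc {a q : ℕ} (ha : a ∈ Finset.Icc 1 q) : (a / q : ℝ) ∈ Set.Ioc 0 1 := by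
  obtain ⟨ha₁, haq⟩ := Finset.mem_Icc.1 ha
  have hq : (0 : ℝ) < q := Nat.cast_pos.2 (ha₁.trans haq)
  exact ⟨div_pos (Nat.cast_pos.2 ha₁) hq, (div_le_one hq).2 (Nat.cast_le.2 haq)⟩

theorem stmt16_general {ι : Type*} (I : Finset ι) {c : ℂ} (hc : c ≠ 0) (f : ι → ℂ) {x : ι → ℝ}
    (hx : ∀ i ∈ I, x i ∈ Set.Ioc 0 1) :
    HasDerivAt (fun s : ℂ ↦ c ^ (-s) * ∑ i ∈ I, f i * hurwitzZeta (x i : UnitAddCircle) s)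
      (-Complex.log c * ∑ i ∈ I, f i * (1 / 2 - x i) +
        (∑ i ∈ I, f i * Real.log (Real.Gamma (x i))) -
        1 / 2 * Real.log (2 * π) * ∑ i ∈ I, f i) 0 := by
  have hpow : HasDerivAt (fun s : ℂ ↦ c ^ (-s)) (c ^ (-0 : ℂ) * Complex.log c * -1) 0 :=
    (hasDerivAt_neg 0).const_cpow (Or.inl hc)
  have hsum := HasDerivAt.fun_sum fun i hi ↦
    (hasDerivAt_hurwitzZeta_zero (hx i hi)).const_mul (f i)
  have hvalue : ∑ i ∈ I, f i * hurwitzZeta (x i : UnitAddCircle) 0 =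
      ∑ i ∈ I, f i * (1 / 2 - x i) :=
    Finset.sum_congr rfl fun i hi ↦ by rw [hurwitzZeta_apply_zero (hx i hi)]
  refine (hpow.fun_mul hsum).congr_deriv ?_
  simp only [hvalue, neg_zero, Complex.cpow_zero, mul_sub (f _) (Real.log _ : ℂ),
    Finset.sum_sub_distrib, ← Finset.sum_mul]
  ring

/-- For a periodic function `f` with period `q ≥ 2`,
`L'(0,f) = -log q ∑_{a=1}^q f(a)(1/2 - a/q) + ∑_{a=1}^q f(a) log Γ(a/q)
  - (1/2) log(2π) ∑_{a=1}^q f(a)`. -/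
theorem stmt16 (q : ℕ) (hq : 2 ≤ q) (f : ℤ → ℂ)
    (hper : ∀ n : ℤ, f (n + q) = f n) :
    Lderiv0 q f =
      -(Real.log q : ℂ) * ∑ a ∈ Finset.Icc 1 q, f a * (1 / 2 - (a : ℂ) / q) +
        (∑ a ∈ Finset.Icc 1 q, f a * (Real.log (Real.Gamma ((a : ℝ) / q)) : ℂ)) -
        (1 / 2) * (Real.log (2 * π) : ℂ) * ∑ a ∈ Finset.Icc 1 q, f a := by
  have hq₀ : (q : ℂ) ≠ 0 := Nat.cast_ne_zero.2 (by lia)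
  simpa [Lderiv0] using
    (stmt16_general (Finset.Icc 1 q) hq₀ (fun a ↦ f a) fun _ ↦ natCast_div_mem_Ioc).deriv
end

section
/- Let q ≥ 1 and let f : ℤ → ℂ be a periodic function with period q satisfying ∑_{a=1}^{q} f(a) = 0. Then the Dirichlet series L(s,f) = ∑_{n≥1} f(n)/n^s converges at s = 1 and L(1,f) = ∑_{a=1}^{q} f(a) γ(a,q), where γ(a,q) = lim_{x→∞} ( ∑_{0 < n ≤ x, n ≡ a (mod q)} 1/n - (1/q) log x ). -/
/-!
Because `f` sums to zero over a period, subtracting one and the same constant (here `log N / q`)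
from each residue-class partial sum of `∑ 1 / n` does not change the combination of these sums with
coefficients `f a`, which is the partial sum of `∑ f n / n`. The corrected class sums converge to
`γ(a, q)`, and there are only finitely many of them.
-/

open Finset Filter Topology

theorem sum_Icc_one_comp_mod {M : Type*} [AddCommMonoid M] (q : ℕ) (g : ℕ → M) :
    ∑ a ∈ Icc 1 q, g (a % q) = ∑ r ∈ range q, g r := by
  rw [← Nat.image_Ico_mod 1 q, sum_image (Nat.mod_injOn_Ico 1 q), add_comm 1 q,
    Ico_add_one_right_eq_Icc]

theorem sum_Icc_one_sum_filter_modEq {M : Type*} [AddCommMonoid M] {q : ℕ} (hq : 0 < q)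
    (s : Finset ℕ) (g : ℕ → M) :
    ∑ a ∈ Icc 1 q, ∑ n ∈ s with n ≡ a [MOD q], g n = ∑ n ∈ s, g n :=
  calc ∑ a ∈ Icc 1 q, ∑ n ∈ s with n ≡ a [MOD q], g n
    _ = ∑ r ∈ range q, ∑ n ∈ s with n % q = r, g n :=
      sum_Icc_one_comp_mod q fun r => ∑ n ∈ s with n % q = r, g n
    _ = ∑ n ∈ s, g n :=
      sum_fiberwise_of_maps_to (fun n _ => mem_range.2 (n.mod_lt hq)) g

theorem eq_of_periodic_of_modEq {α : Type*} {q : ℕ} {f : ℕ → α} (hf : Function.Periodic f q)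
    {m n : ℕ} (h : m ≡ n [MOD q]) : f m = f n := by
  rw [← hf.map_mod_nat m, h, hf.map_mod_nat]

theorem sum_smul_eq_sum_modEq_smul {R E : Type*} [Semiring R] [AddCommMonoid E] [Module R E]
    {q : ℕ} (hq : 0 < q) {f : ℕ → E} (hf : Function.Periodic f q) (s : Finset ℕ) (w : ℕ → R) :
    ∑ n ∈ s, w n • f n = ∑ a ∈ Icc 1 q, (∑ n ∈ s with n ≡ a [MOD q], w n) • f a :=
  calc ∑ n ∈ s, w n • f n
    _ = ∑ a ∈ Icc 1 q, ∑ n ∈ s with n ≡ a [MOD q], w n • f n :=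
      (sum_Icc_one_sum_filter_modEq hq s _).symm
    _ = ∑ a ∈ Icc 1 q, ∑ n ∈ s with n ≡ a [MOD q], w n • f a :=
      sum_congr rfl fun _ _ => sum_congr rfl fun _ hn =>
        congrArg _ (eq_of_periodic_of_modEq hf (mem_filter.1 hn).2)
    _ = ∑ a ∈ Icc 1 q, (∑ n ∈ s with n ≡ a [MOD q], w n) • f a := by
      simp only [sum_smul]

theorem sum_sub_const_smul_of_sum_eq_zero {ι R E : Type*} [Ring R] [AddCommGroup E] [Module R E]
    {t : Finset ι} {v : ι → E} (hv : ∑ i ∈ t, v i = 0) (S : ι → R) (c : R) :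
    ∑ i ∈ t, (S i - c) • v i = ∑ i ∈ t, S i • v i := by
  simp only [sub_smul, sum_sub_distrib, ← smul_sum, hv, smul_zero, sub_zero]

theorem stmt17_general {ι R E : Type*} [Ring R] [TopologicalSpace R] [AddCommGroup E]
    [TopologicalSpace E] [ContinuousAdd E] [Module R E] [ContinuousSMul R E]
    {q : ℕ} (hq : 0 < q) {f : ℕ → E} (hf : Function.Periodic f q) (hsum : ∑ a ∈ Icc 1 q, f a = 0)
    {l : Filter ι} {s : ι → Finset ℕ} {w : ℕ → R} {c : ι → R} {γ : ℕ → R}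
    (hγ : ∀ a ∈ Icc 1 q,
      Tendsto (fun i => (∑ n ∈ s i with n ≡ a [MOD q], w n) - c i) l (𝓝 (γ a))) :
    Tendsto (fun i => ∑ n ∈ s i, w n • f n) l (𝓝 (∑ a ∈ Icc 1 q, γ a • f a)) := by
  have hregularized (i : ι) : ∑ n ∈ s i, w n • f n =
      ∑ a ∈ Icc 1 q, ((∑ n ∈ s i with n ≡ a [MOD q], w n) - c i) • f a := by
    rw [sum_smul_eq_sum_modEq_smul hq hf, sum_sub_const_smul_of_sum_eq_zero hsum]
  simp only [hregularized]
  exact tendsto_finsetSum _ fun a ha => (hγ a ha).smul_const (f a)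

/-- For a periodic `f` with period `q` satisfying `∑_{a=1}^q f(a) = 0`, the Dirichlet series
`L(s,f)` converges at `s = 1` (as the limit of its partial sums) with value
`∑_{a=1}^q f(a) γ(a,q)`, where `γ(a,q)` is the limit of
`∑_{0 < n ≤ x, n ≡ a (mod q)} 1/n - (1/q) log x`. -/
theorem stmt17 (q : ℕ) (hq : 1 ≤ q) (f : ℤ → ℂ)
    (hper : ∀ n : ℤ, f (n + q) = f n)
    (hsum : ∑ a ∈ Finset.Icc 1 q, f a = 0)
    (γ : ℕ → ℝ)
    (hγ : ∀ a ∈ Finset.Icc 1 q,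
      Filter.Tendsto
        (fun N : ℕ =>
          (∑ n ∈ Finset.filter (fun n => n % q = a % q) (Finset.Icc 1 N), (1 : ℝ) / n)
            - Real.log N / q)
        Filter.atTop (nhds (γ a))) :
    Filter.Tendsto (fun N : ℕ => ∑ n ∈ Finset.Icc 1 N, f n / n)
      Filter.atTop (nhds (∑ a ∈ Finset.Icc 1 q, f a * (γ a : ℂ))) := by
  have hf : Function.Periodic (fun n : ℕ => f n) q := fun n => mod_cast hper n
  simpa [div_eq_inv_mul, mul_comm (f _)] using stmt17_general hq hf hsum hγ
end
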